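/- Let G ⊊ ℝⁿ (n ≥ 2) be a domain. Suppose there exist a point q ∈ ∂G, a radius r > 0, and orthogonal unit vectors e, w ∈ ℝⁿ such that the line segment {q + t e : |t| ≤ r} is contained in the boundary ∂G and the open half-ball {x ∈ ℝⁿ : |x − q| < r and ⟨x − q, w⟩ > 0} is contained in G. Then for every c > 0 the function φ̂ᶜ_G(x,y) = log(1 + 2|x−y|/(c(d_G(x) + d_G(y)))) fails the triangle inequality: there exist x, y, z ∈ G with φ̂ᶜ_G(x,z) + φ̂ᶜ_G(z,y) < φ̂ᶜ_G(x,y). In particular, φ̂ᶜ_G is not a metric on G. -/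

import Mathlib

open scoped RealInnerProductSpace

/-- `f` is a metric on the subset `S`. -/
def IsMetricOn {E : Type*} (S : Set E) (f : E → E → ℝ) : Prop :=
  (∀ x ∈ S, ∀ y ∈ S, 0 ≤ f x y) ∧ (∀ x ∈ S, ∀ y ∈ S, (f x y = 0 ↔ x = y)) ∧
  (∀ x ∈ S, ∀ y ∈ S, f x y = f y x) ∧
  (∀ x ∈ S, ∀ y ∈ S, ∀ z ∈ S, f x y ≤ f x z + f z y)

/-- The Euclidean distance from `x` to the boundary of `G` (equivalently, to the
complement of `G`, for open `G`). -/
noncomputable def distBd {n : ℕ} (G : Set (EuclideanSpace ℝ (Fin n)))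
    (x : EuclideanSpace ℝ (Fin n)) : ℝ :=
  Metric.infDist x Gᶜ

/-!
Let `x` and `y` tend, within `G`, to two distinct boundary points while `z ∈ G` stays fixed. Then
`d_G(x) + d_G(y) → 0` while `|x - y|` stays away from `0`, so `φ̂ᶜ_G(x, y) → ∞`. The terms
`φ̂ᶜ_G(x, z)` and `φ̂ᶜ_G(z, y)` stay bounded, because `d_G(z) > 0` keeps their denominators away
from `0`.
-/

theorem not_isMetricOn_of_exists_add_lt {E : Type*} {S : Set E} {f : E → E → ℝ}
    (h : ∃ x ∈ S, ∃ y ∈ S, ∃ z ∈ S, f x z + f z y < f x y) : ¬ IsMetricOn S f := by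
  rintro ⟨-, -, -, htri⟩
  obtain ⟨x, hx, y, hy, z, hz, hlt⟩ := h
  exact hlt.not_ge (htri x hx y hy z hz)

section PhiHat

open Filter Metric Topology

variable {X : Type*} [PseudoMetricSpace X] {G : Set X} {c : ℝ}

/-- The candidate metric `φ̂ᶜ_G` on a subset `G` of a pseudometric space, with `d_G` encoded as the
distance to the complement of `G`, as in `distBd`. -/
noncomputable def phiHat (c : ℝ) (G : Set X) (x y : X) : ℝ :=
  Real.log (1 + 2 * dist x y / (c * (infDist x Gᶜ + infDist y Gᶜ)))

theorem phiHat_comm (c : ℝ) (G : Set X) (x y : X) : phiHat c G x y = phiHat c G y x := by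
  rw [phiHat, phiHat, dist_comm, add_comm (infDist x Gᶜ)]

theorem continuous_phiHat_left (hc : 0 < c) {z : X} (hz : 0 < infDist z Gᶜ) :
    Continuous fun x => phiHat c G x z := by
  have hden (x : X) : 0 < c * (infDist x Gᶜ + infDist z Gᶜ) :=
    mul_pos hc (add_pos_of_nonneg_of_pos infDist_nonneg hz)
  have harg (x : X) : 0 < 1 + 2 * dist x z / (c * (infDist x Gᶜ + infDist z Gᶜ)) :=
    add_pos_of_pos_of_nonneg one_pos (div_nonneg (by positivity) (hden x).le)
  have hden_cont : Continuous fun x => c * (infDist x Gᶜ + infDist z Gᶜ) :=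
    ((continuous_infDist_pt _).add continuous_const).const_mul c
  have hnum_cont : Continuous fun x => 2 * dist x z :=
    (continuous_id.dist continuous_const).const_mul 2
  have hquot_cont := hnum_cont.div hden_cont fun x => (hden x).ne'
  exact (continuous_const.add hquot_cont).log fun x => (harg x).ne'

theorem infDist_compl_pos_of_isOpen (hG : IsOpen G) (hne : Gᶜ.Nonempty) {x : X} (hx : x ∈ G) :
    0 < infDist x Gᶜ :=
  (hG.isClosed_compl.notMem_iff_infDist_pos hne).1 (Set.notMem_compl_iff.2 hx)

theorem tendsto_infDist_compl_nhdsWithin_frontier (hG : IsOpen G) {p : X} (hp : p ∈ frontier G) :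
    Tendsto (fun x => infDist x Gᶜ) (𝓝[G] p) (𝓝[>] 0) := by
  have hpG : p ∈ Gᶜ := (hG.frontier_eq ▸ hp).2
  refine tendsto_nhdsWithin_iff.2 ⟨?_, ?_⟩
  · rw [← infDist_zero_of_mem hpG]
    exact (continuous_infDist_pt _).continuousWithinAt
  · filter_upwards [self_mem_nhdsWithin] with x hx
    exact infDist_compl_pos_of_isOpen hG ⟨p, hpG⟩ hx

theorem tendsto_phiHat_frontier_atTop (hc : 0 < c) (hG : IsOpen G) {p q : X}
    (hp : p ∈ frontier G) (hq : q ∈ frontier G) (hpq : 0 < dist p q) :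
    Tendsto (fun v : X × X => phiHat c G v.1 v.2) (𝓝[G] p ×ˢ 𝓝[G] q) atTop := by
  have hnum : Tendsto (fun v : X × X => 2 * dist v.1 v.2) (𝓝[G] p ×ˢ 𝓝[G] q)
      (𝓝 (2 * dist p q)) :=
    ((tendsto_fst.mono_right nhdsWithin_le_nhds).dist
      (tendsto_snd.mono_right nhdsWithin_le_nhds)).const_mul 2
  have hden : Tendsto (fun v : X × X => c * (infDist v.1 Gᶜ + infDist v.2 Gᶜ))
      (𝓝[G] p ×ˢ 𝓝[G] q) (𝓝[>] 0) := by
    obtain ⟨hp₀, hp_pos⟩ := tendsto_nhdsWithin_iff.1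
      ((tendsto_infDist_compl_nhdsWithin_frontier hG hp).comp tendsto_fst)
    obtain ⟨hq₀, hq_pos⟩ := tendsto_nhdsWithin_iff.1
      ((tendsto_infDist_compl_nhdsWithin_frontier hG hq).comp tendsto_snd)
    refine tendsto_nhdsWithin_iff.2 ⟨by simpa using (hp₀.add hq₀).const_mul c, ?_⟩
    filter_upwards [hp_pos, hq_pos] with v hv₁ hv₂
    exact mul_pos hc (add_pos hv₁ hv₂)
  have hquot := hnum.pos_mul_atTop (mul_pos two_pos hpq) hden.inv_tendsto_nhdsGT_zero
  exact Real.tendsto_log_atTop.comp (tendsto_atTop_add_const_left _ 1 hquot)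

theorem eventually_phiHat_add_phiHat_lt (hc : 0 < c) (hG : IsOpen G) {p q z : X}
    (hp : p ∈ frontier G) (hq : q ∈ frontier G) (hpq : 0 < dist p q) (hz : z ∈ G) :
    ∀ᶠ v in 𝓝[G] p ×ˢ 𝓝[G] q,
      phiHat c G v.1 z + phiHat c G z v.2 < phiHat c G v.1 v.2 := by
  have hz_pos : 0 < infDist z Gᶜ :=
    infDist_compl_pos_of_isOpen hG ⟨p, (hG.frontier_eq ▸ hp).2⟩ hz
  have hcont := continuous_phiHat_left (G := G) hc hz_pos
  have hdetour : Tendsto (fun v : X × X => phiHat c G v.1 z + phiHat c G z v.2)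
      (𝓝[G] p ×ˢ 𝓝[G] q) (𝓝 (phiHat c G p z + phiHat c G q z)) := by
    simp only [phiHat_comm c G z]
    exact (hcont.continuousWithinAt.tendsto.comp tendsto_fst).add
      (hcont.continuousWithinAt.tendsto.comp tendsto_snd)
  have hdirect := tendsto_phiHat_frontier_atTop hc hG hp hq hpq
  filter_upwards [hdetour.eventually_lt_const (lt_add_one _), hdirect.eventually_gt_atTop _]
    with v hv₁ hv₂
  exact hv₁.trans hv₂

theorem exists_phiHat_add_phiHat_lt (hc : 0 < c) (hG : IsOpen G) {p q : X}
    (hp : p ∈ frontier G) (hq : q ∈ frontier G) (hpq : 0 < dist p q) :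
    ∃ x ∈ G, ∃ y ∈ G, ∃ z ∈ G, phiHat c G x z + phiHat c G z y < phiHat c G x y := by
  have hp_cl : p ∈ closure G := frontier_subset_closure hp
  obtain ⟨z, hz⟩ : G.Nonempty := closure_nonempty_iff.1 ⟨p, hp_cl⟩
  have : (𝓝[G] p).NeBot := mem_closure_iff_nhdsWithin_neBot.1 hp_cl
  have : (𝓝[G] q).NeBot := mem_closure_iff_nhdsWithin_neBot.1 (frontier_subset_closure hq)
  have hmem : ∀ᶠ v in 𝓝[G] p ×ˢ 𝓝[G] q, v.1 ∈ G ∧ v.2 ∈ G :=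
    Eventually.prod_mk self_mem_nhdsWithin self_mem_nhdsWithin
  obtain ⟨⟨x, y⟩, ⟨hx, hy⟩, hlt⟩ :=
    (hmem.and (eventually_phiHat_add_phiHat_lt hc hG hp hq hpq hz)).exists
  exact ⟨x, hx, y, hy, z, hz, hlt⟩

end PhiHat

theorem stmt3_general {X : Type*} [MetricSpace X] {G : Set X} (hG : IsOpen G)
    (hfr : (frontier G).Nontrivial) {c : ℝ} (hc : 0 < c) :
    (∃ x ∈ G, ∃ y ∈ G, ∃ z ∈ G, phiHat c G x z + phiHat c G z y < phiHat c G x y) ∧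
      ¬ IsMetricOn G (phiHat c G) := by
  obtain ⟨p, hp, q, hq, hpq⟩ := hfr
  have hviolation := exists_phiHat_add_phiHat_lt hc hG hp hq (dist_pos.2 hpq)
  exact ⟨hviolation, not_isMetricOn_of_exists_add_lt hviolation⟩

theorem stmt3 (n : ℕ) (hn : 2 ≤ n) (G : Set (EuclideanSpace ℝ (Fin n)))
    (hopen : IsOpen G) (hconn : IsConnected G) (hproper : G ≠ Set.univ)
    (q : EuclideanSpace ℝ (Fin n)) (hq : q ∈ frontier G)
    (r : ℝ) (hr : 0 < r) (e w : EuclideanSpace ℝ (Fin n))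
    (he : ‖e‖ = 1) (hw : ‖w‖ = 1) (hew : ⟪e, w⟫ = 0)
    (hseg : ∀ t : ℝ, |t| ≤ r → q + t • e ∈ frontier G)
    (hball : ∀ x : EuclideanSpace ℝ (Fin n), dist x q < r → 0 < ⟪x - q, w⟫ → x ∈ G)
    (c : ℝ) (hc : 0 < c) :
    (∃ x ∈ G, ∃ y ∈ G, ∃ z ∈ G,
      Real.log (1 + 2 * dist x z / (c * (distBd G x + distBd G z))) +
        Real.log (1 + 2 * dist z y / (c * (distBd G z + distBd G y))) <
        Real.log (1 + 2 * dist x y / (c * (distBd G x + distBd G y)))) ∧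
    ¬ IsMetricOn G
      (fun x y => Real.log (1 + 2 * dist x y / (c * (distBd G x + distBd G y)))) := by
  have hne : q ≠ q + r • e := by simp [hr.ne', norm_ne_zero_iff.1 (he ▸ one_ne_zero)]
  exact stmt3_general hopen ⟨q, hq, q + r • e, hseg r (abs_of_pos hr).le, hne⟩ hc
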